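/- Leftover hash lemma: Let 𝒳, 𝒵 be countable sets and 𝒱, 𝒦 finite sets. Let ℱ be a finite 2-universal family of maps f : 𝒳 → 𝒦, i.e., (1/|ℱ|)·Σ_{f∈ℱ} 1{f(x) = f(x′)} ≤ 1/|𝒦| for all x ≠ x′. Let (X,V,Z) have joint pmf P_{XVZ}, and let S be uniformly distributed on ℱ, independent of (X,V,Z); set K = S(X) (the map S applied to X). Then for every pmf Q_Z on 𝒵 with supp(P_Z) ⊆ supp(Q_Z): d(P_{KVZS}, P_unif × P_{VZ} × P_S) ≤ (1/2)·√( |𝒦|·|𝒱|·2^{−H_min(P_{XZ}|Q_Z)} ), where H_min(P_{XZ}|Q_Z) = −log sup_{x,z : Q_Z(z)>0} P_{XZ}(x,z)/Q_Z(z). -/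

import Mathlib

open scoped BigOperators

noncomputable section

attribute [local instance] Classical.propDecidable

/-- Probability of a set under a pmf. -/
def probOf {α : Type*} (P : α → ℝ) (S : Set α) : ℝ := ∑' a : S, P a

/-- `P` is a probability mass function. -/
def IsPMF {α : Type*} (P : α → ℝ) : Prop := (∀ a, 0 ≤ P a) ∧ ∑' a, P a = 1

/-- Variational distance between two pmfs. -/
def tvDist {α : Type*} (P Q : α → ℝ) : ℝ := (1 / 2) * ∑' a, |P a - Q a|

/-!
Fix a value `w` of the side information. Averaged over the seed, the second moment of the hashed
mass `k ↦ P(S(x) = k, w)` is a collision probability: two draws from `P(·, w)` collide either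
because they are equal, which contributes at most `P(w) * sup_x P(x, w)`, or because a 2-universal
`S` identifies them, which has probability at most `1 / |𝒦|`. The latter contribution is at most
the squared mean, so the variance only sees the former, and Cauchy-Schwarz over `𝒦` and `ℱ` turns
this into an `L¹` bound by `√(|𝒦| * P(w) * sup_x P(x, w))`. If `P(x, w) ≤ M * Q(w)`, then AM-GM,
`√(Q(w) * P(w)) ≤ (Q(w) + P(w)) / 2`, allows summation over `w`. The factor `|𝒱|` comes from the
reference pmf `Q(v, z) = Q_Z(z) / |𝒱|`.
-/

namespace IsPMF

variable {α β : Type*}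

lemma summable {P : α → ℝ} (hP : IsPMF P) : Summable P :=
  by_contra fun hs => by simpa [tsum_eq_zero_of_not_summable hs] using hP.2

lemma hasSum {P : α → ℝ} (hP : IsPMF P) : HasSum P 1 :=
  hP.2 ▸ hP.summable.hasSum

lemma nonempty {P : α → ℝ} (hP : IsPMF P) : Nonempty α := by
  by_contra hα
  rw [not_nonempty_iff] at hα
  simpa using hP.2

lemma summable_section {P : α × β → ℝ} (hP : IsPMF P) (b : β) : Summable fun a => P (a, b) :=
  hP.summable.comp_injective (Prod.mk_left_injective b)

lemma hasSum_marginal_snd {P : α × β → ℝ} (hP : IsPMF P) : HasSum (fun b => ∑' a, P (a, b)) 1 :=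
  ((Equiv.prodComm β α).hasSum_iff.mpr hP.hasSum).prod_fiberwise
    fun b => (hP.summable_section b).hasSum

end IsPMF

lemma tvDist_le_of_sum_abs_le {α β γ : Type*} [Fintype γ] (e : β × γ ≃ α) {P Q : α → ℝ}
    {b : β → ℝ} {s : ℝ} (hb : HasSum b s)
    (hle : ∀ i, ∑ j, |P (e (i, j)) - Q (e (i, j))| ≤ b i) :
    tvDist P Q ≤ 1 / 2 * s := by
  set D : β × γ → ℝ := fun i => |P (e i) - Q (e i)|
  have hfiber : Summable fun i => ∑ j, D (i, j) :=
    .of_nonneg_of_le (fun i => Finset.sum_nonneg fun j _ => abs_nonneg _) hle hb.summable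
  have hD : Summable D :=
    (summable_prod_of_nonneg fun i => abs_nonneg _).mpr
      ⟨fun i => .of_finite, by simpa only [tsum_fintype] using hfiber⟩
  refine mul_le_mul_of_nonneg_left ?_ (by norm_num)
  calc ∑' a, |P a - Q a| = ∑' i, D i := (e.tsum_eq _).symm
    _ = ∑' i, ∑ j, D (i, j) := by simp only [hD.tsum_prod, tsum_fintype]
    _ ≤ s := hb.tsum_eq ▸ hfiber.tsum_le_tsum hle hb.summable

lemma sum_sub_mean_sq {ι : Type*} [Fintype ι] (a : ι → ℝ) :
    ∑ i, (a i - (Fintype.card ι : ℝ)⁻¹ * ∑ j, a j) ^ 2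
      = ∑ i, a i ^ 2 - (Fintype.card ι : ℝ)⁻¹ * (∑ i, a i) ^ 2 := by
  rcases isEmpty_or_nonempty ι with _ | _
  · simp
  · simp_rw [sub_sq, Finset.sum_add_distrib, Finset.sum_sub_distrib, ← Finset.sum_mul,
      ← Finset.mul_sum, Finset.sum_const, Finset.card_univ, nsmul_eq_mul]
    field

lemma sq_expect_sum_abs_le {ι κ : Type*} [Fintype ι] [Nonempty ι] [Fintype κ] (a : ι → κ → ℝ) :
    (𝔼 i, ∑ k, |a i k|) ^ 2 ≤ Fintype.card κ * 𝔼 i, ∑ k, a i k ^ 2 := by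
  calc (𝔼 i, ∑ k, |a i k|) ^ 2 ≤ 𝔼 i, (∑ k, |a i k|) ^ 2 := by
        simpa using Finset.expect_mul_sq_le_sq_mul_sq Finset.univ (fun i => ∑ k, |a i k|) 1
    _ ≤ 𝔼 i, Fintype.card κ * ∑ k, a i k ^ 2 := by
        refine Finset.expect_le_expect fun i _ => ?_
        simpa using sq_sum_le_card_mul_sum_sq (s := Finset.univ) (f := fun k => |a i k|)
    _ = Fintype.card κ * 𝔼 i, ∑ k, a i k ^ 2 := (Finset.mul_expect ..).symm

lemma expect_tsum {ι α : Type*} [Fintype ι] {g : ι → α → ℝ} (hg : ∀ i, Summable (g i)) :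
    𝔼 i, ∑' a, g i a = ∑' a, 𝔼 i, g i a := by
  simp only [Fintype.expect_eq_sum_div_card, tsum_div_const,
    Summable.tsum_finsetSum fun i _ => hg i]

/-- The image under `h` of the mass function `p`: the law of `h(X)` when `X` has law `p`. -/
def pushforward {X K : Type*} (h : X → K) (p : X → ℝ) (k : K) : ℝ :=
  ∑' x, if h x = k then p x else 0

section Pushforward

variable {X K : Type*} {p : X → ℝ}

lemma summable_ite_fiber (hs : Summable p) (h : X → K) (k : K) :
    Summable fun x => if h x = k then p x else 0 :=
  hs.indicator {x | h x = k}

lemma pushforward_nonneg (hp : ∀ x, 0 ≤ p x) (h : X → K) (k : K) : 0 ≤ pushforward h p k :=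
  tsum_nonneg fun x => by split_ifs <;> simp [hp]

variable [Fintype K]

lemma hasSum_mul_comp_pushforward (hs : Summable p) (h : X → K) (g : K → ℝ) :
    HasSum (fun x => p x * g (h x)) (∑ k, pushforward h p k * g k) := by
  have hfiber := hasSum_sum fun k (_ : k ∈ Finset.univ) =>
    (summable_ite_fiber hs h k).hasSum.mul_right (g k)
  simpa only [pushforward, ite_mul, zero_mul, Finset.sum_ite_eq, Finset.mem_univ, if_true]
    using hfiber

lemma sum_pushforward (hs : Summable p) (h : X → K) : ∑ k, pushforward h p k = ∑' x, p x := by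
  simpa using (hasSum_mul_comp_pushforward hs h 1).tsum_eq.symm

end Pushforward

/-- A family of maps into a finite set `K` is 2-universal if a uniformly drawn member of it
identifies any two given distinct points with probability at most `1 / |K|`. -/
def IsTwoUniversal {X K F : Type*} [Fintype K] [Fintype F] (fam : F → X → K) : Prop :=
  ∀ x x' : X, x ≠ x' →
    ((Finset.univ.filter fun f : F => fam f x = fam f x').card : ℝ) / (Fintype.card F : ℝ)
      ≤ 1 / (Fintype.card K : ℝ)

namespace IsTwoUniversal

variable {X K F : Type*} [Fintype K] [Fintype F] [Nonempty F] {fam : F → X → K} {p : X → ℝ} {M : ℝ}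

lemma expect_collision_le (h2u : IsTwoUniversal fam) (x y : X) :
    𝔼 f, (if fam f x = fam f y then 1 else 0 : ℝ)
      ≤ (Fintype.card K : ℝ)⁻¹ + if x = y then 1 else 0 := by
  rcases eq_or_ne x y with rfl | hxy
  · simp
  · simpa [Fintype.expect_eq_sum_div_card, hxy] using h2u x y hxy

lemma expect_pushforward_apply_le (h2u : IsTwoUniversal fam) (hp : ∀ x, 0 ≤ p x)
    (hs : Summable p) (x : X) :
    𝔼 f, pushforward (fam f) p (fam f x) ≤ (Fintype.card K : ℝ)⁻¹ * ∑' y, p y + p x := by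
  have hbound : HasSum (fun y => p y * ((Fintype.card K : ℝ)⁻¹ + if y = x then 1 else 0))
      ((Fintype.card K : ℝ)⁻¹ * ∑' y, p y + p x) := by
    simpa [mul_add, mul_comm] using (hs.hasSum.mul_left (Fintype.card K : ℝ)⁻¹).add
      (hasSum_single (f := fun y => p y * if y = x then 1 else 0) x fun y hy => by simp [hy])
  have hle : ∀ y, 𝔼 f, (if fam f y = fam f x then p y else 0)
      ≤ p y * ((Fintype.card K : ℝ)⁻¹ + if y = x then 1 else 0) := fun y => by
    simpa only [Finset.mul_expect, mul_ite, mul_one, mul_zero]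
      using mul_le_mul_of_nonneg_left (h2u.expect_collision_le y x) (hp y)
  have hnonneg : ∀ y, 0 ≤ 𝔼 f, (if fam f y = fam f x then p y else 0) := fun y =>
    Finset.expect_nonneg fun f _ => by split_ifs <;> simp [hp]
  calc 𝔼 f, pushforward (fam f) p (fam f x)
      = ∑' y, 𝔼 f, (if fam f y = fam f x then p y else 0) :=
        expect_tsum fun f => summable_ite_fiber hs (fam f) (fam f x)
    _ ≤ (Fintype.card K : ℝ)⁻¹ * ∑' y, p y + p x :=
        hbound.tsum_eq ▸ (hbound.summable.of_nonneg_of_le hnonneg hle).tsum_le_tsum hle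
          hbound.summable

lemma expect_sum_pushforward_sq_le (h2u : IsTwoUniversal fam) (hp : ∀ x, 0 ≤ p x)
    (hs : Summable p) (hM : ∀ x, p x ≤ M) :
    𝔼 f, ∑ k, pushforward (fam f) p k ^ 2
      ≤ (Fintype.card K : ℝ)⁻¹ * (∑' x, p x) ^ 2 + M * ∑' x, p x := by
  have hcollision f := hasSum_mul_comp_pushforward hs (fam f) (pushforward (fam f) p)
  have hle : ∀ x, 𝔼 f, p x * pushforward (fam f) p (fam f x)
      ≤ p x * ((Fintype.card K : ℝ)⁻¹ * ∑' y, p y + M) := fun x => by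
    rw [← Finset.mul_expect]
    refine mul_le_mul_of_nonneg_left ?_ (hp x)
    exact (h2u.expect_pushforward_apply_le hp hs x).trans (by gcongr; exact hM x)
  have hnonneg : ∀ x, 0 ≤ 𝔼 f, p x * pushforward (fam f) p (fam f x) := fun x =>
    Finset.expect_nonneg fun f _ => mul_nonneg (hp x) (pushforward_nonneg hp _ _)
  calc 𝔼 f, ∑ k, pushforward (fam f) p k ^ 2
      = ∑' x, 𝔼 f, p x * pushforward (fam f) p (fam f x) := by
        simp only [sq, ← (hcollision _).tsum_eq, expect_tsum fun f => (hcollision f).summable]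
    _ ≤ ∑' x, p x * ((Fintype.card K : ℝ)⁻¹ * ∑' y, p y + M) :=
        (Summable.of_nonneg_of_le hnonneg hle (hs.mul_right _)).tsum_le_tsum hle (hs.mul_right _)
    _ = (Fintype.card K : ℝ)⁻¹ * (∑' x, p x) ^ 2 + M * ∑' x, p x := by
        rw [tsum_mul_right]
        ring

lemma expect_sum_abs_pushforward_sub_le (h2u : IsTwoUniversal fam) (hp : ∀ x, 0 ≤ p x)
    (hs : Summable p) (hM : ∀ x, p x ≤ M) :
    𝔼 f, ∑ k, |pushforward (fam f) p k - (Fintype.card K : ℝ)⁻¹ * ∑' x, p x|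
      ≤ √(Fintype.card K * (M * ∑' x, p x)) := by
  have hvariance : 𝔼 f, ∑ k, (pushforward (fam f) p k - (Fintype.card K : ℝ)⁻¹ * ∑' x, p x) ^ 2
      ≤ M * ∑' x, p x := by
    have hmean f := sum_sub_mean_sq (pushforward (fam f) p)
    simp only [sum_pushforward hs] at hmean
    simp only [hmean, Finset.expect_sub_distrib, Fintype.expect_const]
    linarith [h2u.expect_sum_pushforward_sq_le hp hs hM]
  exact Real.le_sqrt_of_sq_le ((sq_expect_sum_abs_le _).trans (by gcongr))

end IsTwoUniversal

lemma sqrt_mul_le_half_add {a b : ℝ} (ha : 0 ≤ a) (hb : 0 ≤ b) : √(a * b) ≤ (a + b) / 2 :=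
  Real.sqrt_le_iff.mpr ⟨by positivity, by linarith [four_mul_le_sq_add a b]⟩

theorem leftover_hash_general {X V Z K F : Type*} [Fintype K] [Fintype F] [Nonempty F]
    {fam : F → X → K} (h2u : IsTwoUniversal fam) {P : X × V × Z → ℝ} (hP : IsPMF P)
    {Q : V × Z → ℝ} (hQ : IsPMF Q) {M : ℝ} (hM : ∀ x v z, P (x, v, z) ≤ M * Q (v, z)) :
    tvDist
      (fun w : K × V × Z × F => (Fintype.card F : ℝ)⁻¹ *
        ∑' x : X, if fam w.2.2.2 x = w.1 then P (x, w.2.1, w.2.2.1) else 0)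
      (fun w : K × V × Z × F => (Fintype.card K : ℝ)⁻¹ *
        (∑' x : X, P (x, w.2.1, w.2.2.1)) * (Fintype.card F : ℝ)⁻¹)
      ≤ (1 / 2) * √(Fintype.card K * M) := by
  let e : (V × Z) × (F × K) ≃ K × V × Z × F :=
    ⟨fun i => (i.2.2, i.1.1, i.1.2, i.2.1), fun w => ((w.2.1, w.2.2.1), (w.2.2.2, w.1)),
      fun _ => rfl, fun _ => rfl⟩
  have hmean : HasSum (fun i => √(Fintype.card K * M) * ((Q i + ∑' x, P (x, i)) / 2))
      √(Fintype.card K * M) := by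
    simpa using ((hQ.hasSum.add hP.hasSum_marginal_snd).div_const 2).mul_left √(Fintype.card K * M)
  refine tvDist_le_of_sum_abs_le e hmean fun i => ?_
  have hmarginal : 0 ≤ ∑' x, P (x, i) := tsum_nonneg fun x => hP.1 _
  calc _ = 𝔼 f, ∑ k, |pushforward (fam f) (fun x => P (x, i)) k
          - (Fintype.card K : ℝ)⁻¹ * ∑' x, P (x, i)| := by
        rw [Fintype.expect_eq_sum_div_card, Fintype.sum_prod_type, div_eq_inv_mul]
        simp only [Finset.mul_sum]
        refine Finset.sum_congr rfl fun f _ => Finset.sum_congr rfl fun k _ => ?_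
        rw [mul_comm _ (Fintype.card F : ℝ)⁻¹, ← mul_sub, abs_mul, abs_of_nonneg (by positivity)]
        rfl
    _ ≤ √(Fintype.card K * (M * Q i * ∑' x, P (x, i))) :=
        h2u.expect_sum_abs_pushforward_sub_le (fun x => hP.1 _) (hP.summable_section i)
          fun x => hM x i.1 i.2
    _ = √(Fintype.card K * M) * √(Q i * ∑' x, P (x, i)) := by
        rw [← Real.sqrt_mul' _ (mul_nonneg (hQ.1 i) hmarginal)]
        ring_nf
    _ ≤ √(Fintype.card K * M) * ((Q i + ∑' x, P (x, i)) / 2) := by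
        gcongr
        exact sqrt_mul_le_half_add (hQ.1 i) hmarginal

/-- The product of the uniform pmf on `V` with the mass function `Q`. -/
def uniformProd (V : Type*) [Fintype V] {Z : Type*} (Q : Z → ℝ) (w : V × Z) : ℝ :=
  (Fintype.card V : ℝ)⁻¹ * Q w.2

section UniformProd

variable {X V Z : Type*} [Fintype V] {P : X × V × Z → ℝ} {Q : Z → ℝ} {M : ℝ}

lemma isPMF_uniformProd [Nonempty V] (hQ : IsPMF Q) : IsPMF (uniformProd V Q) := by
  refine ⟨fun w => mul_nonneg (by positivity) (hQ.1 w.2), HasSum.tsum_eq ?_⟩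
  have huniform : HasSum (fun _ : V => (Fintype.card V : ℝ)⁻¹) 1 := by
    simpa using hasSum_fintype fun _ : V => (Fintype.card V : ℝ)⁻¹
  simpa only [mul_one] using! huniform.mul hQ.hasSum
    (huniform.summable.mul_of_nonneg hQ.summable (fun _ => by positivity) hQ.1)

lemma IsPMF.apply_le_mul_uniformProd (hP : IsPMF P) (hQ : ∀ z, 0 ≤ Q z)
    (hsupp : ∀ z, Q z = 0 → ∑' (x) (v), P (x, v, z) = 0)
    (hM : ∀ x z, 0 < Q z → ∑' v, P (x, v, z) ≤ M * Q z) (x : X) (v : V) (z : Z) :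
    P (x, v, z) ≤ Fintype.card V * M * uniformProd V Q (v, z) := by
  have hsum : P (x, v, z) ≤ ∑' v, P (x, v, z) :=
    Summable.of_finite.le_tsum (f := fun v => P (x, v, z)) v fun _ _ => hP.1 _
  have hle : P (x, v, z) ≤ M * Q z := by
    rcases (hQ z).eq_or_lt with hz | hz
    · have hmarginal : Summable fun x => ∑' v, P (x, v, z) := by
        simpa only [tsum_fintype] using summable_sum fun v _ => hP.summable_section (v, z)
      have hzero : ∑' v, P (x, v, z) ≤ 0 :=
        hsupp z hz.symm ▸ hmarginal.le_tsum x fun _ _ => tsum_nonneg fun _ => hP.1 _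
      simpa [← hz] using hsum.trans hzero
    · exact hsum.trans (hM x z hz)
  have : Nonempty V := ⟨v⟩
  calc P (x, v, z) ≤ M * Q z := hle
    _ = Fintype.card V * M * uniformProd V Q (v, z) := by
      simp only [uniformProd]
      field

end UniformProd

/-- the leftover hash lemma. Here `c` plays the role of the
conditional min-entropy `H_min(P_XZ | Q_Z)`: the hypothesis `hc` says
`P_XZ(x,z) ≤ 2^{-c}·Q_Z(z)` on `{Q_Z > 0}`, i.e. `H_min(P_XZ|Q_Z) ≥ c`,
which holds in particular for `c = H_min(P_XZ|Q_Z) = −log sup P_XZ/Q_Z`.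
The joint pmf of `(K, V, Z, S)` is `P_unif(s') · Σ_x 1{f_{s'}(x)=k}·P_XVZ(x,v,z)`
(the seed `S` is uniform on the family `F` and independent of `(X,V,Z)`, and
`K = f_S(X)`). -/
theorem leftover_hash
    {X Z : Type*} [Countable X] [Countable Z]
    (V K F : Type) [Fintype V] [Fintype K] [Fintype F] [Nonempty F]
    (fam : F → X → K)
    -- 2-universality of the family
    (h2u : ∀ x x' : X, x ≠ x' →
      ((Finset.univ.filter fun f : F => fam f x = fam f x').card : ℝ) / (Fintype.card F : ℝ)
        ≤ 1 / (Fintype.card K : ℝ))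
    (P : X × V × Z → ℝ) (hP : IsPMF P)
    (QZ : Z → ℝ) (hQZ : IsPMF QZ)
    -- supp(P_Z) ⊆ supp(Q_Z)
    (hsupp : ∀ z, QZ z = 0 → (∑' (x : X) (v : V), P (x, v, z)) = 0)
    (c : ℝ)
    -- H_min(P_XZ | Q_Z) ≥ c
    (hc : ∀ x z, 0 < QZ z → (∑' v : V, P (x, v, z)) ≤ (2 : ℝ) ^ (-c) * QZ z) :
    tvDist
      -- P_{KVZS}
      (fun w : K × V × Z × F => (Fintype.card F : ℝ)⁻¹ *
        ∑' x : X, if fam w.2.2.2 x = w.1 then P (x, w.2.1, w.2.2.1) else 0)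
      -- P_unif × P_{VZ} × P_S
      (fun w : K × V × Z × F => (Fintype.card K : ℝ)⁻¹ *
        (∑' x : X, P (x, w.2.1, w.2.2.1)) * (Fintype.card F : ℝ)⁻¹)
      ≤ (1 / 2) * Real.sqrt
          ((Fintype.card K : ℝ) * (Fintype.card V : ℝ) * (2 : ℝ) ^ (-c)) := by
  have : Nonempty V := hP.nonempty.map fun w => w.2.1
  rw [mul_assoc (Fintype.card K : ℝ)]
  exact leftover_hash_general h2u hP (isPMF_uniformProd hQZ)
    (hP.apply_le_mul_uniformProd hQZ.1 hsupp hc)
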